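/- Let G be a group and θ an involutive automorphism of G (i.e. θ ∘ θ = id). For g ∈ G set s(g) = g⁻¹ · θ(g), and let γ = s(g). Let N be a subgroup of G all of whose elements are fixed by θ. Assume that twisted conjugation by γ is injective on N, i.e. for all n, n' ∈ N, n⁻¹ γ n = n'⁻¹ γ n' implies n = n'. Then the map N × N → G sending (n₁, n₂) to g⁻¹ n₁ g n₂ is injective. -/

import Mathlib

/-- Let `G` be a group, `θ` an involutive automorphism of `G`, and for `g ∈ G` set
`s g = g⁻¹ * θ g` and `γ = s g`. Let `N` be a subgroup of `G` pointwise fixed by `θ`.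
If twisted conjugation by `γ` is injective on `N`, then the map
`(n₁, n₂) ↦ g⁻¹ * n₁ * g * n₂` from `N × N` to `G` is injective. -/
theorem injective_eta_of_twisted_conj_injective
    {G : Type*} [Group G] (θ : G ≃* G) (hθ : ∀ g : G, θ (θ g) = g)
    (s : G → G) (hs : ∀ g : G, s g = g⁻¹ * θ g)
    (g : G) (γ : G) (hγ : γ = s g)
    (N : Subgroup G) (hNfix : ∀ n ∈ N, θ n = n)
    (htc : ∀ n ∈ N, ∀ n' ∈ N, n⁻¹ * γ * n = n'⁻¹ * γ * n' → n = n') :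
    Function.Injective (fun p : N × N => g⁻¹ * (p.1 : G) * g * (p.2 : G)) := by
  rintro ⟨⟨a, ha⟩, ⟨b, hb⟩⟩ ⟨⟨c, hc⟩, ⟨d, hd⟩⟩ h
  have h' : g⁻¹ * a * g * b = g⁻¹ * c * g * d := h
  have key : ∀ x ∈ N, ∀ y ∈ N, y⁻¹ * γ * y = s (g * (g⁻¹ * x * g * y)) := by
    intro x hx y hy
    have e : g * (g⁻¹ * x * g * y) = x * g * y := by group
    rw [e, hγ, hs, hs, map_mul, map_mul, hNfix x hx, hNfix y hy]
    group
  have hbd : b = d := htc b hb d hd (by rw [key a ha b hb, key c hc d hd, h'])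
  subst hbd
  have hac : a = c := by simpa using h'
  subst hac
  rfl
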